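/- Let f : ℝ² → ℝ be of class C² satisfying (i) D²f(p)(q,q) > 0 for all p, q ∈ ℝ² with q ≠ 0, and (ii) there is a constant Λ > 0 with |D²f(p)| ≤ Λ/(1+|p|) for all p ∈ ℝ². Let u ∈ C²(ℝ²) be an entire solution of div[Df(∇u)] = 0 on ℝ². Suppose there exist two linearly independent vectors E₁, E₂ ∈ ℝ² and a constant K > 0 such that |∂_{E₁}u(x)| · ln²(1+|∂_{E₁}u(x)|) ≤ K(|∂_{E₂}u(x)| + 1) for all x ∈ ℝ², where ∂_{E_α}u denotes the directional derivative of u in direction E_α. Then u is an affine function. -/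

import Mathlib

open Real MeasureTheory Metric
open scoped ENNReal

noncomputable section

/-- `ℝ²` with its Euclidean structure. -/
abbrev E2 : Type := EuclideanSpace ℝ (Fin 2)

/-- The `i`-th standard basis vector of `ℝ²`. -/
def ee (i : Fin 2) : E2 := EuclideanSpace.single i 1

/-- The Hessian bilinear form `D²f(p)(q,q)`. -/
def Hess (f : E2 → ℝ) (p q : E2) : ℝ := iteratedFDeriv ℝ 2 f p ![q, q]

/-- The partial derivative `∂ᵢu(x)`. -/
def pd (u : E2 → ℝ) (i : Fin 2) (x : E2) : ℝ := fderiv ℝ u x (ee i)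

/-- The equation `div [Df(∇u)] = 0`, i.e. `∑ i, ∂ᵢ[(∂f/∂pᵢ)(∇u(x))] = 0` on `ℝ²`. -/
def solves (f u : E2 → ℝ) : Prop :=
  ∀ x : E2, ∑ i : Fin 2, fderiv ℝ (fun y => fderiv ℝ f (gradient u y) (ee i)) x (ee i) = 0

/-- A compactly supported `C¹` function is orthogonal to a `C¹` divergence-free field. -/
lemma sum_integral_mul_fderiv_eq_zero (B : Fin 2 → E2 → ℝ) (hB : ∀ i, ContDiff ℝ 1 (B i))
    (hdiv : ∀ x, ∑ i, fderiv ℝ (B i) x (ee i) = 0) (φ : E2 → ℝ) (hφ : ContDiff ℝ 1 φ)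
    (hc : HasCompactSupport φ) :
    ∑ i, ∫ x, B i x * fderiv ℝ φ x (ee i) = 0 := by
  have hφ' : Continuous (fderiv ℝ φ) := hφ.continuous_fderiv one_ne_zero
  have hB' : ∀ i, Continuous (fderiv ℝ (B i)) := fun i => (hB i).continuous_fderiv one_ne_zero
  have hBc : ∀ i, Continuous (B i) := fun i => (hB i).continuous
  have hφc := hφ.continuous
  have hint : ∀ i, Integrable (fun x => fderiv ℝ (B i) x (ee i) * φ x) := fun i =>
    Continuous.integrable_of_hasCompactSupport
      (by have := hB' i; fun_prop) (hc.mul_left)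
  have key : ∀ i, ∫ x, B i x * fderiv ℝ φ x (ee i) =
      - ∫ x, fderiv ℝ (B i) x (ee i) * φ x := by
    intro i
    refine integral_mul_fderiv_eq_neg_fderiv_mul_of_integrable (hint i) ?_ ?_
      (fun x _ => (hB i).differentiable one_ne_zero x)
      (fun x _ => hφ.differentiable one_ne_zero x)
    · exact Continuous.integrable_of_hasCompactSupport (by have := hBc i; fun_prop)
        (hc.fderiv_apply ℝ (ee i)).mul_left
    · exact Continuous.integrable_of_hasCompactSupport (by have := hBc i; fun_prop) hc.mul_left
  simp_rw [key]
  rw [Finset.sum_neg_distrib, ← integral_finsetSum _ (fun i _ => hint i)]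
  simp [← Finset.sum_mul, hdiv]

/-- Differentiation of a translate tested against a compactly supported function. -/
lemma hasDerivAt_integral_translate_mul (A ψ : E2 → ℝ) (hA : ContDiff ℝ 1 A) (hψ : Continuous ψ)
    (hc : HasCompactSupport ψ) (w : E2) :
    HasDerivAt (fun t : ℝ => ∫ x, A (x + t • w) * ψ x) (∫ x, fderiv ℝ A x w * ψ x) 0 := by
  have hA' : Continuous (fderiv ℝ A) := hA.continuous_fderiv one_ne_zero
  have hAc := hA.continuous
  have hcomp : IsCompact (Set.Icc (-1 : ℝ) 1 ×ˢ tsupport ψ) := isCompact_Icc.prod hc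
  obtain ⟨M, hM⟩ := hcomp.exists_bound_of_continuousOn
    (f := fun q : ℝ × E2 => fderiv ℝ A (q.2 + q.1 • w) w) (by fun_prop)
  have h := hasDerivAt_integral_of_dominated_loc_of_deriv_le (μ := (volume : Measure E2))
    (F := fun (t : ℝ) x => A (x + t • w) * ψ x)
    (F' := fun (t : ℝ) x => fderiv ℝ A (x + t • w) w * ψ x) (x₀ := (0 : ℝ))
    (s := Set.Icc (-1) 1) (bound := fun x => M * ‖ψ x‖)
    (Icc_mem_nhds (by norm_num) (by norm_num))
    (Filter.Eventually.of_forall fun t => Continuous.aestronglyMeasurable (by fun_prop))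
    (Continuous.integrable_of_hasCompactSupport (by fun_prop) hc.mul_left)
    (Continuous.aestronglyMeasurable (by fun_prop))
    (Filter.Eventually.of_forall ?_)
    (Continuous.integrable_of_hasCompactSupport (by fun_prop) hc.norm.mul_left)
    (Filter.Eventually.of_forall ?_)
  · simpa using h.2
  · intro x t ht
    rw [norm_mul]
    by_cases hx : x ∈ tsupport ψ
    · exact mul_le_mul_of_nonneg_right (hM (t, x) ⟨ht, hx⟩) (norm_nonneg _)
    · simp [image_eq_zero_of_notMem_tsupport hx]
  · intro x t _
    have h1 : HasDerivAt (fun t : ℝ => x + t • w) w t := by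
      simpa using ((hasDerivAt_id t).smul_const w).const_add x
    have h2 := (hA.differentiable one_ne_zero (x + t • w)).hasFDerivAt.comp_hasDerivAt t h1
    exact h2.mul_const _

/-- Directional derivatives of a `C¹` divergence-free field are weakly divergence-free. -/
lemma sum_integral_fderiv_mul_fderiv_eq_zero (B : Fin 2 → E2 → ℝ) (hB : ∀ i, ContDiff ℝ 1 (B i))
    (hdiv : ∀ x, ∑ i, fderiv ℝ (B i) x (ee i) = 0) (w : E2) (φ : E2 → ℝ) (hφ : ContDiff ℝ 1 φ)
    (hc : HasCompactSupport φ) :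
    ∑ i, ∫ x, fderiv ℝ (B i) x w * fderiv ℝ φ x (ee i) = 0 := by
  have hφ' : Continuous (fderiv ℝ φ) := hφ.continuous_fderiv one_ne_zero
  have h1 : HasDerivAt (fun t : ℝ => ∑ i, ∫ x, B i (x + t • w) * fderiv ℝ φ x (ee i))
      (∑ i, ∫ x, fderiv ℝ (B i) x w * fderiv ℝ φ x (ee i)) 0 :=
    HasDerivAt.fun_sum fun i _ => hasDerivAt_integral_translate_mul (B i) _ (hB i)
      (by fun_prop) (hc.fderiv_apply ℝ (ee i)) w
  have h2 : (fun t : ℝ => ∑ i, ∫ x, B i (x + t • w) * fderiv ℝ φ x (ee i)) = fun _ => 0 := by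
    funext t
    refine sum_integral_mul_fderiv_eq_zero (fun i x => B i (x + t • w))
      (fun i => (hB i).comp (by fun_prop)) (fun x => ?_) φ hφ hc
    simp only [fderiv_comp_add_right]
    exact hdiv _
  rw [h2] at h1
  exact h1.unique (hasDerivAt_const _ _)

lemma nonpos_of_le_mul_sub_add_div (a : ℕ → ℝ) (M C : ℝ) (hmono : Monotone a)
    (hM : ∀ n, a n ≤ M)
    (h : ∀ δ : ℝ, 0 < δ → ∀ n, a (n + 1) ≤ δ * (a (n + 2) - a n) + C / δ) : a 0 ≤ 0 := by
  have hb : BddAbove (Set.range a) := ⟨M, by rintro _ ⟨n, rfl⟩; exact hM n⟩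
  have hL := tendsto_atTop_ciSup hmono hb
  set L := ⨆ n, a n
  have h1 : ∀ δ : ℝ, 0 < δ → L ≤ C / δ := by
    intro δ hδ
    have hR := ((((Filter.tendsto_add_atTop_iff_nat 2).2 hL).sub hL).const_mul δ).add_const (C / δ)
    have := le_of_tendsto_of_tendsto' ((Filter.tendsto_add_atTop_iff_nat 1).2 hL) hR (h δ hδ)
    simpa using this
  have h2 : L ≤ 0 := by
    have hC : Filter.Tendsto (fun δ : ℝ => C / δ) Filter.atTop (nhds 0) :=
      tendsto_const_nhds.div_atTop Filter.tendsto_id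
    refine ge_of_tendsto hC ?_
    filter_upwards [Filter.eventually_gt_atTop 0] with δ hδ using h1 δ hδ
  exact (le_ciSup hb 0).trans h2

/-- In the plane, the dilations of a cut-off function all have the same Dirichlet integral. -/
lemma integral_norm_fderiv_comp_smul_sq (b : E2 → ℝ) (s : ℝ) (hs : 0 < s) :
    ∫ x, ‖fderiv ℝ (fun y => b (s • y)) x‖ ^ 2 = ∫ x, ‖fderiv ℝ b x‖ ^ 2 := by
  have h : ∀ x, ‖fderiv ℝ (fun y => b (s • y)) x‖ ^ 2 = s ^ 2 * ‖fderiv ℝ b (s • x)‖ ^ 2 := by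
    intro x
    rw [fderiv_comp_smul, norm_smul, mul_pow, Real.norm_eq_abs, sq_abs]
  simp_rw [h]
  rw [integral_const_mul, Measure.integral_comp_smul volume (fun x => ‖fderiv ℝ b x‖ ^ 2) s]
  simp only [finrank_euclideanSpace, Fintype.card_fin, smul_eq_mul]
  rw [abs_of_pos (by positivity)]
  field_simp

/-- A Liouville principle: an energy density in the plane which satisfies a Caccioppoli inequality
with bounded weight vanishes. -/
lemma eq_zero_of_caccioppoli (a : E2 → ℝ) (ha : Continuous a) (ha0 : ∀ x, 0 ≤ a x) (c : ℝ)
    (h : ∀ η : E2 → ℝ, ContDiff ℝ 1 η → HasCompactSupport η →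
      ∃ g : E2 → ℝ, Integrable g ∧ ∫ x, g x = 0 ∧
        (∀ x, fderiv ℝ η x = 0 → η x ^ 2 * a x ≤ g x) ∧
        ∀ x δ, 0 < δ → η x ^ 2 * a x ≤ g x + δ * (η x ^ 2 * a x) + c / δ * ‖fderiv ℝ η x‖ ^ 2)
    (x : E2) : a x = 0 := by
  let b : ContDiffBump (0 : E2) := ⟨1, 2, one_pos, one_lt_two⟩
  let η : ℝ → E2 → ℝ := fun s x => b (s • x)
  have hη : ∀ s, ContDiff ℝ 1 (η s) := fun s => b.contDiff.comp (by fun_prop)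
  have hηc : ∀ s, 0 < s → HasCompactSupport (η s) := fun s hs =>
    b.hasCompactSupport.comp_smul hs.ne'
  have hηcont : ∀ s, Continuous (η s) := fun s => (hη s).continuous
  have hη0 : ∀ s x, 0 ≤ η s x := fun s x => b.nonneg
  have hη1 : ∀ s x, η s x ≤ 1 := fun s x => b.le_one
  have hone : ∀ s x, ‖s • x‖ ≤ 1 → η s x = 1 := fun s x hx =>
    b.one_of_mem_closedBall (by simpa using hx)
  have hzero : ∀ s x, 2 ≤ ‖s • x‖ → η s x = 0 := fun s x hx =>
    b.zero_of_le_dist (by simpa using hx)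
  let J := ∫ x, ‖fderiv ℝ b x‖ ^ 2
  have hDint : ∀ s, 0 < s → Integrable (fun x => ‖fderiv ℝ (η s) x‖ ^ 2) := by
    intro s hs
    have hcont : Continuous (fderiv ℝ (η s)) := (hη s).continuous_fderiv one_ne_zero
    refine Continuous.integrable_of_hasCompactSupport (by fun_prop) ?_
    exact ((hηc s hs).fderiv ℝ).comp_left (g := fun L => ‖L‖ ^ 2) (by simp)
  have hJs : ∀ s, 0 < s → ∫ x, ‖fderiv ℝ (η s) x‖ ^ 2 = J := fun s hs =>
    integral_norm_fderiv_comp_smul_sq b s hs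
  have hEint : ∀ s, 0 < s → Integrable (fun x => η s x ^ 2 * a x) := by
    intro s hs
    have := hηcont s
    refine Continuous.integrable_of_hasCompactSupport (by fun_prop) ?_
    exact ((hηc s hs).comp_left (g := fun r => r ^ 2) (by simp)).mul_right
  let I : ℝ → ℝ := fun s => ∫ x, η s x ^ 2 * a x
  have hIdef : ∀ s, I s = ∫ x, η s x ^ 2 * a x := fun _ => rfl
  -- nested cut-offs
  have hnest : ∀ s x, 0 < s → η s x ≤ η (s / 2) x := by
    intro s x hs
    by_cases hx : 2 ≤ ‖s • x‖
    · rw [hzero s x hx]; exact hη0 _ _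
    · rw [hone (s / 2) x ?_]
      · exact hη1 _ _
      · rw [norm_smul, Real.norm_of_nonneg (by positivity)] at *
        linarith
  have hmono : ∀ s, 0 < s → I s ≤ I (s / 2) := by
    intro s hs
    refine integral_mono (hEint s hs) (hEint _ (by positivity)) fun x => ?_
    exact mul_le_mul_of_nonneg_right (pow_le_pow_left₀ (hη0 _ _) (hnest s x hs) 2) (ha0 x)
  have hbound : ∀ s, 0 < s → I s ≤ 4 * (c * J) := by
    intro s hs
    obtain ⟨g, hg, hg0, -, hle⟩ := h (η s) (hη s) (hηc s hs)
    have hgE : Integrable (fun x => g x + 1 / 2 * (η s x ^ 2 * a x)) :=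
      hg.add ((hEint s hs).const_mul _)
    have h1 : I s ≤ ∫ x, (g x + 1 / 2 * (η s x ^ 2 * a x) +
        c / (1 / 2) * ‖fderiv ℝ (η s) x‖ ^ 2) := by
      refine integral_mono (hEint s hs) ?_ fun x => hle x (1 / 2) (by norm_num)
      exact hgE.add ((hDint s hs).const_mul _)
    rw [integral_add hgE ((hDint s hs).const_mul _),
      integral_add hg ((hEint s hs).const_mul _), integral_const_mul, integral_const_mul, hJs s hs,
      hg0, ← hIdef] at h1
    linarith
  have hhole : ∀ δ : ℝ, 0 < δ → ∀ s, 0 < s →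
      I s ≤ δ * (I (s / 2) - I (2 * s)) + c * J / δ := by
    intro δ hδ s hs
    obtain ⟨g, hg, hg0, heq, hle⟩ := h (η s) (hη s) (hηc s hs)
    have hs2 : 0 < s / 2 := by positivity
    have h2s : 0 < 2 * s := by positivity
    have hdiff : Integrable (fun x => η (s / 2) x ^ 2 * a x - η (2 * s) x ^ 2 * a x) :=
      (hEint (s / 2) hs2).sub (hEint (2 * s) h2s)
    have hgE : Integrable
        (fun x => g x + δ * (η (s / 2) x ^ 2 * a x - η (2 * s) x ^ 2 * a x)) :=
      hg.add (hdiff.const_mul δ)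
    have h1 : I s ≤ ∫ x, (g x + δ * (η (s / 2) x ^ 2 * a x - η (2 * s) x ^ 2 * a x) +
        c / δ * ‖fderiv ℝ (η s) x‖ ^ 2) := by
      refine integral_mono (hEint s hs) ?_ fun x => ?_
      · exact hgE.add ((hDint s hs).const_mul _)
      · by_cases hx : fderiv ℝ (η s) x = 0
        · have e1 : η (2 * s) x ≤ η (s / 2) x := by
            have := hnest (2 * s) x h2s
            rw [mul_div_cancel_left₀ s two_ne_zero] at this
            exact this.trans (hnest s x hs)
          have e2 := mul_le_mul_of_nonneg_right (pow_le_pow_left₀ (hη0 _ _) e1 2) (ha0 x)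
          have e3 := heq x hx
          have e4 := mul_nonneg hδ.le (sub_nonneg.2 e2)
          simp only [hx, norm_zero]
          linarith
        · have f1 : ‖s • x‖ ≤ 2 := by
            by_contra hcon
            push Not at hcon
            apply hx
            have : η s =ᶠ[nhds x] fun _ => 0 := by
              have ho : IsOpen {y : E2 | 2 < ‖s • y‖} :=
                isOpen_lt continuous_const (by fun_prop)
              filter_upwards [ho.mem_nhds hcon] with y hy using hzero s y (le_of_lt hy)
            rw [this.fderiv_eq]; simp
          have f2 : 1 ≤ ‖s • x‖ := by
            by_contra hcon
            push Not at hcon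
            apply hx
            have : η s =ᶠ[nhds x] fun _ => 1 := by
              have ho : IsOpen {y : E2 | ‖s • y‖ < 1} :=
                isOpen_lt (by fun_prop) continuous_const
              filter_upwards [ho.mem_nhds hcon] with y hy using hone s y (le_of_lt hy)
            rw [this.fderiv_eq]; simp
          rw [norm_smul, Real.norm_of_nonneg hs.le] at f1 f2
          have f3 : η (s / 2) x = 1 := hone _ _ (by
            rw [norm_smul, Real.norm_of_nonneg hs2.le]; linarith)
          have f4 : η (2 * s) x = 0 := hzero _ _ (by
            rw [norm_smul, Real.norm_of_nonneg h2s.le]; linarith)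
          have f5 := hle x δ hδ
          have f6 : η s x ^ 2 * a x ≤ 1 * a x :=
            mul_le_mul_of_nonneg_right (pow_le_one₀ (hη0 _ _) (hη1 _ _)) (ha0 x)
          have f7 := mul_le_mul_of_nonneg_left f6 hδ.le
          simp only [f3, f4]
          linarith
    rw [integral_add hgE ((hDint s hs).const_mul _),
      integral_add hg (hdiff.const_mul δ), integral_const_mul, integral_const_mul, hJs s hs,
      hg0, integral_sub (hEint (s / 2) hs2) (hEint (2 * s) h2s), ← hIdef, ← hIdef] at h1
    calc I s ≤ _ := h1
      _ = _ := by ring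
  have hI : ∀ s, 0 < s → I s ≤ 0 := by
    intro s hs
    have := nonpos_of_le_mul_sub_add_div (fun n => I (s / 2 ^ n)) (4 * (c * J)) (c * J)
      (monotone_nat_of_le_succ fun n => by
        have := hmono (s / 2 ^ n) (by positivity)
        rwa [div_div, ← pow_succ] at this)
      (fun n => hbound _ (by positivity)) (fun δ hδ n => by
        have := hhole δ hδ (s / 2 ^ (n + 1)) (by positivity)
        rw [div_div, ← pow_succ] at this
        rwa [show 2 * (s / 2 ^ (n + 1)) = s / 2 ^ n by field_simp; ring] at this)
    simpa using this
  by_contra hax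
  have hs : 0 < 1 / (1 + ‖x‖) := by positivity
  have hη1x : η (1 / (1 + ‖x‖)) x = 1 := hone _ _ (by
    rw [norm_smul, Real.norm_of_nonneg hs.le, div_mul_eq_mul_div, div_le_one (by positivity)]
    linarith)
  have hpos : 0 < I (1 / (1 + ‖x‖)) := by
    have := hηcont (1 / (1 + ‖x‖))
    refine Continuous.integral_pos_of_hasCompactSupport_nonneg_nonzero (x := x) (by fun_prop)
      ?_ (fun y => mul_nonneg (sq_nonneg _) (ha0 y)) (by rw [hη1x]; simpa using hax)
    exact ((hηc _ hs).comp_left (g := fun r => r ^ 2) (by simp)).mul_right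
  exact absurd (hI _ hs) (not_le.2 hpos)

lemma hasDerivAt_arctan_arsinh (s : ℝ) :
    HasDerivAt (fun s => arctan (arsinh s)) ((1 + arsinh s ^ 2) * √(1 + s ^ 2))⁻¹ s := by
  convert (hasDerivAt_arsinh s).arctan using 1
  rw [mul_inv, one_div]

lemma one_add_arsinh_sq_mul_sqrt_le (s : ℝ) :
    (1 + arsinh s ^ 2) * √(1 + s ^ 2) ≤ 14 * (1 + |s| * log (1 + |s|) ^ 2) := by
  have h0 : 0 ≤ |s| := abs_nonneg s
  have hsqrt : √(1 + s ^ 2) ≤ 1 + |s| := by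
    rw [Real.sqrt_le_left (by positivity), ← sq_abs s]
    nlinarith
  set r := |s| with hr
  set l := log (1 + r) with hl
  have hl0 : 0 ≤ l := Real.log_nonneg (by linarith)
  have hlr : l ≤ r := by
    have := Real.log_le_sub_one_of_pos (show 0 < 1 + r by linarith)
    linarith
  have habs : |arsinh s| ≤ 1 + l := by
    have e1 : |arsinh s| = arsinh r := by
      rcases le_total 0 s with h | h
      · rw [abs_of_nonneg (arsinh_nonneg_iff.2 h), hr, abs_of_nonneg h]
      · rw [abs_of_nonpos (arsinh_nonpos_iff.2 h), hr, abs_of_nonpos h, arsinh_neg]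
    rw [e1, arsinh, hr, sq_abs, ← hr]
    have e2 : log (r + √(1 + s ^ 2)) ≤ log (2 * (1 + r)) :=
      Real.log_le_log (by positivity) (by linarith)
    rw [Real.log_mul two_ne_zero (by positivity)] at e2
    have := Real.log_two_lt_d9
    linarith
  have hsq : arsinh s ^ 2 ≤ (1 + l) ^ 2 := by
    rw [← sq_abs]; exact pow_le_pow_left₀ (abs_nonneg _) habs 2
  have h1 : (1 + arsinh s ^ 2) * √(1 + s ^ 2) ≤ (1 + (1 + l) ^ 2) * (1 + r) :=
    mul_le_mul (by linarith) hsqrt (by positivity) (by positivity)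
  have h2 : l ^ 2 ≤ 1 + r * l ^ 2 := by
    rcases le_total r 1 with h | h
    · nlinarith [mul_nonneg h0 (sq_nonneg l)]
    · nlinarith [sq_nonneg l]
  have h3 : r ≤ 3 + r * l ^ 2 := by
    rcases le_total r 3 with h | h
    · nlinarith [mul_nonneg h0 (sq_nonneg l)]
    · have : 1 ≤ l := by
        rw [hl, Real.le_log_iff_exp_le (by linarith)]
        linarith [Real.exp_one_lt_d9]
      nlinarith [mul_nonneg h0 (show 0 ≤ l ^ 2 - 1 by nlinarith)]
  have h4 : (1 + (1 + l) ^ 2) * (1 + r) ≤ (3 + 2 * l ^ 2) * (1 + r) :=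
    mul_le_mul_of_nonneg_right (by nlinarith [sq_nonneg (l - 1)]) (by linarith)
  nlinarith [mul_nonneg h0 (sq_nonneg l)]

lemma eq_ee_add_ee (x : E2) : x = x 0 • ee 0 + x 1 • ee 1 := by
  ext i; fin_cases i <;> simp [ee]

/-- The vector representing a linear form on `ℝ²`, as a linear function of the form. -/
def sharp : (E2 →L[ℝ] ℝ) →L[ℝ] E2 :=
  ∑ i, (ContinuousLinearMap.apply ℝ ℝ (ee i)).smulRight (ee i)

lemma sharp_apply (L : E2 →L[ℝ] ℝ) : sharp L = ∑ i, L (ee i) • ee i := by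
  simp [sharp]

lemma toDual_symm_eq_sharp (L : E2 →L[ℝ] ℝ) :
    (InnerProductSpace.toDual ℝ E2).symm L = sharp L := by
  refine ext_inner_right ℝ fun v => ?_
  rw [InnerProductSpace.toDual_symm_apply, sharp_apply]
  conv_lhs => rw [eq_ee_add_ee v]
  simp [ee, inner_add_left, inner_smul_left, EuclideanSpace.inner_single_left]
  ring

lemma norm_sharp (L : E2 →L[ℝ] ℝ) : ‖sharp L‖ = ‖L‖ := by
  rw [← toDual_symm_eq_sharp, LinearIsometryEquiv.norm_map]

lemma gradient_eq_sharp (u : E2 → ℝ) : gradient u = fun x => sharp (fderiv ℝ u x) :=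
  funext fun x => toDual_symm_eq_sharp (fderiv ℝ u x)

lemma sum_mul_apply_ee (P L : E2 →L[ℝ] ℝ) : ∑ i, P (ee i) * L (ee i) = P (sharp L) := by
  simp [sharp_apply, mul_comm]

/-- In the plane, a symmetric form which annihilates a nonzero vector and is orthogonal to a
positive definite symmetric form vanishes. -/
lemma eq_zero_of_apply_eq_zero_of_sum_eq_zero (H U : E2 →L[ℝ] E2 →L[ℝ] ℝ)
    (hH : ∀ a b, H a b = H b a) (hpos : ∀ q, q ≠ 0 → 0 < H q q) (hU : ∀ a b, U a b = U b a)
    (E : E2) (hE : E ≠ 0) (hUE : ∀ w, U E w = 0)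
    (hsum : ∑ i, H (sharp (U (ee i))) (ee i) = 0) : U = 0 := by
  have e0 := hUE (ee 0)
  have e1 := hUE (ee 1)
  have hn : E 1 • ee 0 - E 0 • ee 1 ≠ 0 := by
    intro h
    have c0 := congrArg (fun q : E2 => q 0) h
    have c1 := congrArg (fun q : E2 => q 1) h
    simp [ee] at c0 c1
    exact hE (by rw [eq_ee_add_ee E, c0, c1]; simp)
  have hpn := hpos _ hn
  have hS : 0 < E 0 ^ 2 + E 1 ^ 2 := by
    by_contra hcon
    have c0 : E 0 = 0 := by nlinarith [sq_nonneg (E 0), sq_nonneg (E 1)]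
    have c1 : E 1 = 0 := by nlinarith [sq_nonneg (E 0), sq_nonneg (E 1)]
    exact hE (by rw [eq_ee_add_ee E, c0, c1]; simp)
  rw [eq_ee_add_ee E] at e0 e1
  simp only [sharp_apply, Fin.sum_univ_two, map_add, map_sub, map_smul, add_apply, sub_apply,
    FunLike.coe_smul, Pi.smul_apply, smul_eq_mul] at hsum hpn e0 e1
  rw [hU (ee 1) (ee 0)] at e0 hsum
  rw [hH (ee 1) (ee 0)] at hsum hpn
  have t0 : (U (ee 0) (ee 0) + U (ee 1) (ee 1)) *
      (E 1 ^ 2 * H (ee 0) (ee 0) - 2 * E 0 * E 1 * H (ee 0) (ee 1) +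
        E 0 ^ 2 * H (ee 1) (ee 1)) = 0 := by
    linear_combination (E 0 ^ 2 + E 1 ^ 2) * hsum
      + (-(E 0) * H (ee 0) (ee 0) - 2 * E 1 * H (ee 0) (ee 1) + E 0 * H (ee 1) (ee 1)) * e0
      + (E 1 * H (ee 0) (ee 0) - 2 * E 0 * H (ee 0) (ee 1) - E 1 * H (ee 1) (ee 1)) * e1
  have t1 : U (ee 0) (ee 0) + U (ee 1) (ee 1) = 0 :=
    (mul_eq_zero.1 t0).resolve_right (by nlinarith)
  have m00 : U (ee 0) (ee 0) = 0 := (mul_eq_zero.1 (show (E 0 ^ 2 + E 1 ^ 2) * _ = 0 by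
    linear_combination E 0 * e0 - E 1 * e1 + E 1 ^ 2 * t1)).resolve_left hS.ne'
  have m01 : U (ee 0) (ee 1) = 0 := (mul_eq_zero.1 (show (E 0 ^ 2 + E 1 ^ 2) * _ = 0 by
    linear_combination E 1 * e0 + E 0 * e1 - E 0 * E 1 * t1)).resolve_left hS.ne'
  have m11 : U (ee 1) (ee 1) = 0 := by linarith
  ext p q
  rw [eq_ee_add_ee p, eq_ee_add_ee q]
  simp [m00, m01, m11, hU (ee 1) (ee 0)]

theorem statement15 (f u : E2 → ℝ)
    (hf : ContDiff ℝ 2 f)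
    (hpos : ∀ p q : E2, q ≠ 0 → 0 < Hess f p q)
    (Lam : ℝ) (hLam : 0 < Lam)
    (hgrow : ∀ p : E2, ‖iteratedFDeriv ℝ 2 f p‖ ≤ Lam / (1 + ‖p‖))
    (hu : ContDiff ℝ 2 u) (heq : solves f u)
    (E₁ E₂ : E2) (hli : LinearIndependent ℝ ![E₁, E₂])
    (K : ℝ) (hK : 0 < K)
    (hbd : ∀ x : E2, |fderiv ℝ u x E₁| * (Real.log (1 + |fderiv ℝ u x E₁|)) ^ 2 ≤
      K * (|fderiv ℝ u x E₂| + 1)) :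
    ∃ a b c : ℝ, ∀ x : E2, u x = a * x 0 + b * x 1 + c := by
  let U : E2 → E2 →L[ℝ] E2 →L[ℝ] ℝ := fderiv ℝ (fderiv ℝ u)
  let H : E2 → E2 →L[ℝ] E2 →L[ℝ] ℝ := fun x => fderiv ℝ (fderiv ℝ f) (gradient u x)
  have hu' : ContDiff ℝ 1 (fderiv ℝ u) := hu.fderiv_right (by norm_num)
  have hf' : ContDiff ℝ 1 (fderiv ℝ f) := hf.fderiv_right (by norm_num)
  have hUc : Continuous U := hu'.continuous_fderiv one_ne_zero
  have hG : ContDiff ℝ 1 (gradient u) := by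
    rw [gradient_eq_sharp]; exact sharp.contDiff.comp hu'
  have hHc : Continuous H := (hf'.continuous_fderiv one_ne_zero).comp hG.continuous
  have hUsymm : ∀ x a b, U x a b = U x b a := fun x a b =>
    (hu.contDiffAt.isSymmSndFDerivAt (by simp)) a b
  have hHsymm : ∀ x a b, H x a b = H x b a := fun x a b =>
    (hf.contDiffAt.isSymmSndFDerivAt (by simp)) a b
  have hHpos : ∀ x q, q ≠ 0 → 0 < H x q q := fun x q hq => by
    simpa [Hess, iteratedFDeriv_two_apply] using hpos (gradient u x) q hq
  have hHnonneg : ∀ x q, 0 ≤ H x q q := fun x q => by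
    by_cases hq : q = 0
    · simp [hq]
    · exact (hHpos x q hq).le
  have hHle : ∀ x q, H x q q ≤ Lam / (1 + ‖gradient u x‖) * ‖q‖ ^ 2 := fun x q => by
    have h1 := (iteratedFDeriv ℝ 2 f (gradient u x)).le_opNorm ![q, q]
    simp only [iteratedFDeriv_two_apply, Fin.prod_univ_two, Matrix.cons_val_zero,
      Matrix.cons_val_one] at h1
    calc H x q q ≤ ‖H x q q‖ := le_abs_self _
      _ ≤ ‖iteratedFDeriv ℝ 2 f (gradient u x)‖ * (‖q‖ * ‖q‖) := h1
      _ ≤ Lam / (1 + ‖gradient u x‖) * (‖q‖ * ‖q‖) :=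
        mul_le_mul_of_nonneg_right (hgrow _) (by positivity)
      _ = _ := by ring
  have hGd : ∀ x, HasFDerivAt (gradient u)
      (sharp.comp (U x)) x := fun x => by
    rw [gradient_eq_sharp]
    exact sharp.hasFDerivAt.comp x (hu'.differentiable one_ne_zero x).hasFDerivAt
  let B : Fin 2 → E2 → ℝ := fun i y => fderiv ℝ f (gradient u y) (ee i)
  have hB : ∀ i, ContDiff ℝ 1 (B i) := fun i => (hf'.comp hG).clm_apply contDiff_const
  have hBd : ∀ i x w, fderiv ℝ (B i) x w = H x (sharp (U x w)) (ee i) := by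
    intro i x w
    have h1 : HasFDerivAt (fun y => fderiv ℝ f (gradient u y)) _ x :=
      (hf'.differentiable one_ne_zero (gradient u x)).hasFDerivAt.comp x (hGd x)
    have h2 := h1.clm_apply (hasFDerivAt_const (ee i) x)
    rw [show B i = fun y => fderiv ℝ f (gradient u y) (ee i) from rfl, h2.fderiv]
    simp [H]
  let v : E2 → ℝ := fun x => fderiv ℝ u x E₁
  let z : E2 → E2 := fun x => sharp (U x E₁)
  have hv : ContDiff ℝ 1 v := hu'.clm_apply contDiff_const
  have hvd : ∀ x, HasFDerivAt v (U x E₁) x := by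
    intro x
    have h2 := (hu'.differentiable one_ne_zero x).hasFDerivAt.clm_apply
      (hasFDerivAt_const E₁ x)
    refine h2.congr_fderiv ?_
    ext h
    simpa using hUsymm x h E₁
  have hvc := hv.continuous
  have hzc : Continuous z := by fun_prop
  let W : ℝ → ℝ := fun s => (1 + arsinh s ^ 2) * √(1 + s ^ 2)
  have hW : ∀ s, 0 < W s := fun s => by positivity
  have hWc : Continuous W := by
    have := Real.continuous_arsinh
    fun_prop
  -- The weight is controlled by the gradient.
  let C := 14 * (1 + K) * (1 + ‖E₂‖)
  have hWle : ∀ x, W (v x) ≤ C * (1 + ‖gradient u x‖) := by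
    intro x
    have h1 := one_add_arsinh_sq_mul_sqrt_le (v x)
    have h2 := hbd x
    have h3 : |fderiv ℝ u x E₂| ≤ ‖gradient u x‖ * ‖E₂‖ := by
      have := (fderiv ℝ u x).le_opNorm E₂
      rwa [Real.norm_eq_abs, ← norm_sharp, ← congrFun (gradient_eq_sharp u) x] at this
    have h4 := mul_le_mul_of_nonneg_left h3 hK.le
    have n1 := norm_nonneg E₂
    have n2 := norm_nonneg (gradient u x)
    have n3 := mul_nonneg n1 n2
    have n4 := mul_nonneg hK.le n1
    have n5 := mul_nonneg hK.le n2
    have h5 : W (v x) ≤ 14 * (1 + K * (‖gradient u x‖ * ‖E₂‖ + 1)) := by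
      simp only [W, v] at *
      linarith
    refine h5.trans ?_
    simp only [C]
    nlinarith
  let a : E2 → ℝ := fun x => (W (v x))⁻¹ * H x (z x) (z x)
  have hac : Continuous a := by
    have h1 : Continuous fun x => (W (v x))⁻¹ :=
      (hWc.comp hvc).inv₀ fun x => (hW _).ne'
    fun_prop
  have ha0 : ∀ x, 0 ≤ a x := fun x => mul_nonneg (inv_nonneg.2 (hW _).le) (hHnonneg _ _)
  have haz : ∀ x, a x = 0 := by
    refine eq_zero_of_caccioppoli a hac ha0 (4 * (C * Lam)) fun η hη hηc => ?_
    let Φ : ℝ → ℝ := fun s => arctan (arsinh s)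
    have hΦ : ContDiff ℝ 1 Φ := contDiff_arctan.comp contDiff_arsinh
    have hΦ4 : ∀ s, Φ s ^ 2 ≤ 4 := fun s => by
      have h1 := Real.arctan_lt_pi_div_two (arsinh s)
      have h2 := Real.neg_pi_div_two_lt_arctan (arsinh s)
      have h3 := Real.pi_lt_d2
      simp only [Φ]
      nlinarith
    let φ : E2 → ℝ := fun x => η x ^ 2 * Φ (v x)
    have hφ : ContDiff ℝ 1 φ := (hη.pow 2).mul (hΦ.comp hv)
    have hφc : HasCompactSupport φ :=
      (hηc.comp_left (g := fun r => r ^ 2) (by simp)).mul_right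
    have hφd : ∀ x, fderiv ℝ φ x = (2 * η x * Φ (v x)) • fderiv ℝ η x +
        (η x ^ 2 * (W (v x))⁻¹) • U x E₁ := by
      intro x
      have h1 := (hη.differentiable one_ne_zero x).hasFDerivAt.pow 2
      have h2 := (hasDerivAt_arctan_arsinh (v x)).comp_hasFDerivAt x (hvd x)
      have h3 := (h1.fun_mul h2).fderiv
      refine h3.trans ?_
      ext h
      simp [Φ, W]
      ring
    have hφ'c : Continuous (fderiv ℝ φ) := hφ.continuous_fderiv one_ne_zero
    have hB'c : ∀ i, Continuous (fderiv ℝ (B i)) := fun i => (hB i).continuous_fderiv one_ne_zero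
    have hint : ∀ i ∈ Finset.univ,
        Integrable (fun x => fderiv ℝ (B i) x E₁ * fderiv ℝ φ x (ee i)) := fun i _ =>
      Continuous.integrable_of_hasCompactSupport (by have := hB'c i; fun_prop)
        (hφc.fderiv_apply ℝ (ee i)).mul_left
    have hweak := sum_integral_fderiv_mul_fderiv_eq_zero B hB heq E₁ φ hφ hφc
    rw [← integral_finsetSum _ hint] at hweak
    have hg : ∀ x, ∑ i, fderiv ℝ (B i) x E₁ * fderiv ℝ φ x (ee i) =
        2 * η x * Φ (v x) * H x (z x) (sharp (fderiv ℝ η x)) + η x ^ 2 * a x := by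
      intro x
      simp_rw [hBd]
      rw [sum_mul_apply_ee, hφd]
      simp [z, a]
      ring
    refine ⟨_, integrable_finsetSum _ hint, hweak, fun x hx => ?_, fun x δ hδ => ?_⟩
    · rw [hg, hx]; simp
    · rw [hg]
      set y := sharp (fderiv ℝ η x)
      have hyn : ‖y‖ = ‖fderiv ℝ η x‖ := norm_sharp _
      have hw := hW (v x)
      have h1 : Φ (v x) ^ 2 * W (v x) * H x y y ≤ 4 * (C * Lam) * ‖y‖ ^ 2 := by
        have hG0 : 0 < 1 + ‖gradient u x‖ := by positivity
        calc Φ (v x) ^ 2 * W (v x) * H x y y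
            ≤ 4 * (C * (1 + ‖gradient u x‖)) * (Lam / (1 + ‖gradient u x‖) * ‖y‖ ^ 2) := by
              have := hHnonneg x y
              have := hHle x y
              have := hΦ4 (v x)
              have := hWle x
              gcongr
          _ = _ := by field_simp
      have h2 := hHnonneg x ((δ * (W (v x))⁻¹ * η x) • z x + Φ (v x) • y)
      simp only [map_add, map_smul, add_apply, FunLike.coe_smul, Pi.smul_apply, smul_eq_mul,
        hHsymm x y (z x)] at h2
      have h3 := mul_nonneg (div_pos hw hδ).le h2
      have h4 : W (v x) / δ * (Φ (v x) ^ 2 * H x y y) ≤ 4 * (C * Lam) / δ * ‖y‖ ^ 2 := by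
        calc _ = (Φ (v x) ^ 2 * W (v x) * H x y y) / δ := by ring
          _ ≤ (4 * (C * Lam) * ‖y‖ ^ 2) / δ := by gcongr
          _ = _ := by ring
      rw [← hyn]
      have h5 : W (v x) / δ * (δ * (W (v x))⁻¹ * η x * (δ * (W (v x))⁻¹ * η x * H x (z x) (z x) +
          Φ (v x) * H x (z x) y) + Φ (v x) * (δ * (W (v x))⁻¹ * η x * H x (z x) y +
          Φ (v x) * H x y y)) = δ * (η x ^ 2 * a x) + 2 * η x * Φ (v x) * H x (z x) y +
          W (v x) / δ * (Φ (v x) ^ 2 * H x y y) := by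
        simp only [a]
        field_simp
        ring
      linarith
  have hz : ∀ x w, U x E₁ w = 0 := by
    intro x w
    have h1 : z x = 0 := by
      by_contra hne
      exact absurd (haz x) (mul_pos (inv_pos.2 (hW (v x))) (hHpos x _ hne)).ne'
    have h2 : U x E₁ = 0 := by rw [← norm_eq_zero, ← norm_sharp, norm_eq_zero]; exact h1
    simp [h2]
  have hE1 : E₁ ≠ 0 := by simpa using hli.ne_zero 0
  have hU0 : ∀ x, U x = 0 := by
    intro x
    refine eq_zero_of_apply_eq_zero_of_sum_eq_zero (H x) (U x) (hHsymm x) (hHpos x) (hUsymm x) E₁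
      hE1 (hz x) ?_
    simp_rw [← hBd]
    exact heq x
  have hcu : ∀ x, fderiv ℝ u x = fderiv ℝ u 0 := fun x =>
    is_const_of_fderiv_eq_zero (hu'.differentiable one_ne_zero) hU0 x 0
  have hlin : ∀ x, u x - fderiv ℝ u 0 x = u 0 - fderiv ℝ u 0 0 := fun x => by
    refine is_const_of_fderiv_eq_zero (f := fun x => u x - fderiv ℝ u 0 x) (𝕜 := ℝ)
      ((hu.differentiable two_ne_zero).sub (fderiv ℝ u 0).differentiable) (fun y => ?_) x 0
    rw [fderiv_fun_sub (hu.differentiable two_ne_zero y) (fderiv ℝ u 0).differentiableAt,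
      hcu y, ContinuousLinearMap.fderiv, sub_self]
  refine ⟨fderiv ℝ u 0 (ee 0), fderiv ℝ u 0 (ee 1), u 0, fun x => ?_⟩
  have h1 := hlin x
  have h2 := congrArg (fderiv ℝ u 0) (eq_ee_add_ee x)
  simp only [map_add, map_smul, smul_eq_mul] at h2
  rw [map_zero] at h1
  linarith
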